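/- arXiv:1906.03062 — 2 statements merged into one kernel-verified Lean document; each statement's English description precedes it below -/
import Mathlib

section
/- Let n ≥ 2, k ≥ 2, N > 0, and let {(β_i,θ_i)}_{i=1}^{k+1} be a 1/N-quadrature rule exact for Λ_{n,k}, with nodes -1 ≤ β_1 < ⋯ < β_{k+1} < 1 and weights θ_i > 0. If for every j = 0,…,k-2 one has θ_k·q_{k-1}(β_k)·(1-β_k)·P_j^{1,0}(β_k) + θ_{k+1}·q_{k-1}(β_{k+1})·(1-β_{k+1})·P_j^{1,0}(β_{k+1}) > 0, then all coefficients e_j in the expansion q_{k-1} = ∑_{j=0}^{k-1} e_j P_j^{1,0} are positive. -/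
open MeasureTheory Finset
open scoped Classical

/-- The (unnormalized) Gegenbauer weight `(1 - t²)^((n-3)/2)`. -/
noncomputable def gegWeight (n : ℕ) (t : ℝ) : ℝ := (1 - t ^ 2) ^ (((n : ℝ) - 3) / 2)

/-- Integration against the probability measure `μ_n` on `[-1,1]` with density
proportional to `(1 - t²)^((n-3)/2)`. -/
noncomputable def gegInt (n : ℕ) (f : ℝ → ℝ) : ℝ :=
  (∫ t in Set.Icc (-1 : ℝ) 1, gegWeight n t)⁻¹ *
    ∫ t in Set.Icc (-1 : ℝ) 1, f t * gegWeight n t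

/-- `P : ℕ → ℝ[X]` is the family of Gegenbauer polynomials for dimension `n`:
`deg P_i = i`, `P_i(1) = 1`, pairwise orthogonal in `L²(μ_n)`. -/
def IsGegenbauer (n : ℕ) (P : ℕ → Polynomial ℝ) : Prop :=
  (∀ i, (P i).natDegree = i) ∧ (∀ i, (P i).eval 1 = 1) ∧
    ∀ i j, i ≠ j → gegInt n (fun t => (P i).eval t * (P j).eval t) = 0

/-- A `1/N`-quadrature rule with nodes `α` and weights `ρ`, exact for a set `Λ`
of functions on `[-1,1]`. -/
def IsQuadratureRule (n : ℕ) (N : ℝ) {k : ℕ} (α ρ : Fin k → ℝ)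
    (Λ : Set (ℝ → ℝ)) : Prop :=
  (∀ i, -1 ≤ α i) ∧ (∀ i, α i < 1) ∧ StrictMono α ∧ (∀ i, 0 < ρ i) ∧
    ∀ f ∈ Λ, gegInt n f = f 1 / N + ∑ i, ρ i * f (α i)

/-- Integration against the probability measure `ν_n` on `[-1,1]` with density
proportional to `(1-t)(1 - t²)^((n-3)/2)`. -/
noncomputable def adjInt (n : ℕ) (f : ℝ → ℝ) : ℝ :=
  (∫ t in Set.Icc (-1 : ℝ) 1, (1 - t) * gegWeight n t)⁻¹ *
    ∫ t in Set.Icc (-1 : ℝ) 1, f t * ((1 - t) * gegWeight n t)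

/-- `Q : ℕ → ℝ[X]` is the family of adjacent polynomials `P_i^{1,0}` for dimension `n`:
`deg Q_i = i`, `Q_i(1) = 1`, pairwise orthogonal in `L²(ν_n)`. -/
def IsAdjacent (n : ℕ) (Q : ℕ → Polynomial ℝ) : Prop :=
  (∀ i, (Q i).natDegree = i) ∧ (∀ i, (Q i).eval 1 = 1) ∧
    ∀ i j, i ≠ j → adjInt n (fun t => (Q i).eval t * (Q j).eval t) = 0

/-- Membership of a polynomial in `Λ_{n,k} = 𝒫_{2k-1} ⊕ span{P_{2k+2}, P_{2k+3}}`: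
degree at most `2k+3` and orthogonality to `P_{2k}` and `P_{2k+1}` in `L²(μ_n)`. -/
def InLambda (n k : ℕ) (P : ℕ → Polynomial ℝ) (p : Polynomial ℝ) : Prop :=
  p.natDegree ≤ 2 * k + 3 ∧
    gegInt n (fun t => p.eval t * (P (2 * k)).eval t) = 0 ∧
    gegInt n (fun t => p.eval t * (P (2 * k + 1)).eval t) = 0

/-- The space `Λ_{n,k}`, as a set of functions on `ℝ`. -/
def LambdaSpace (n k : ℕ) (P : ℕ → Polynomial ℝ) : Set (ℝ → ℝ) :=
  {f | ∃ p : Polynomial ℝ, InLambda n k P p ∧ f = fun t => p.eval t}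

open Polynomial in
theorem aux_integrable (n : ℕ) (hn : 2 ≤ n) (p : ℝ[X]) :
    IntegrableOn (fun t => p.eval t * gegWeight n t) (Set.Icc (-1 : ℝ) 1) := by
  rcases Nat.lt_or_ge n 3 with h | h
  · have h2 : n = 2 := by omega
    subst h2
    have h1 := Polynomial.Chebyshev.intervalIntegrable_sqrt_one_sub_sq_inv
    have h3 := h1.continuousOn_mul (f := fun t => √(1 - t ^ 2)⁻¹) (g := fun t => p.eval t)
      (by fun_prop)
    rw [intervalIntegrable_iff, Set.uIoc_of_le (by norm_num),
      ← integrableOn_Icc_iff_integrableOn_Ioc] at h3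
    refine h3.congr_fun ?_ measurableSet_Icc
    intro t ht
    have ht' : 0 ≤ 1 - t ^ 2 := by nlinarith [ht.1, ht.2]
    have : gegWeight 2 t = √(1 - t ^ 2)⁻¹ := by
      unfold gegWeight
      rw [Real.sqrt_eq_rpow, Real.inv_rpow ht', ← Real.rpow_neg ht']
      norm_num
    simp only [this]
  · apply ContinuousOn.integrableOn_Icc
    apply ContinuousOn.mul (by fun_prop)
    unfold gegWeight
    apply ContinuousOn.rpow_const (by fun_prop)
    intro t _
    right
    have : (3 : ℝ) ≤ n := by exact_mod_cast h
    linarith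

open Polynomial in
/-- The unnormalized Gegenbauer functional on polynomials. -/
noncomputable def auxL (n : ℕ) (hn : 2 ≤ n) : ℝ[X] →ₗ[ℝ] ℝ where
  toFun p := ∫ t in Set.Icc (-1 : ℝ) 1, p.eval t * gegWeight n t
  map_add' p q := by
    rw [← integral_add (aux_integrable n hn p) (aux_integrable n hn q)]
    simp only [eval_add, add_mul]
  map_smul' c p := by
    simp only [eval_smul, smul_eq_mul, mul_assoc, RingHom.id_apply]
    rw [integral_const_mul]

open Polynomial in
theorem auxL_pos (n : ℕ) (hn : 2 ≤ n) (p : ℝ[X]) (hp : p ≠ 0)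
    (h0 : ∀ t ∈ Set.Icc (-1 : ℝ) 1, 0 ≤ p.eval t) : 0 < auxL n hn p := by
  change 0 < ∫ t in Set.Icc (-1 : ℝ) 1, p.eval t * gegWeight n t
  rw [setIntegral_pos_iff_support_of_nonneg_ae _ (aux_integrable n hn p)]
  · have hsub : Set.Ioo (-1 : ℝ) 1 \ (p.roots.toFinset : Set ℝ) ⊆
        Function.support (fun t => p.eval t * gegWeight n t) ∩ Set.Icc (-1 : ℝ) 1 := by
      rintro t ⟨ht, htr⟩
      refine ⟨?_, Set.Ioo_subset_Icc_self ht⟩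
      have h1 : p.eval t ≠ 0 := by
        intro h
        apply htr
        simp [hp, h]
      have h2 : 0 < gegWeight n t := by
        unfold gegWeight
        apply Real.rpow_pos_of_pos
        nlinarith [ht.1, ht.2]
      exact mul_ne_zero h1 h2.ne'
    refine lt_of_lt_of_le ?_ (measure_mono hsub)
    rw [measure_sdiff_null (Finset.measure_zero _ _)]
    simp
  · refine (ae_restrict_iff' measurableSet_Icc).2 (Filter.Eventually.of_forall ?_)
    intro t ht
    refine mul_nonneg (h0 t ht) ?_
    unfold gegWeight
    apply Real.rpow_nonneg
    nlinarith [ht.1, ht.2]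

open Polynomial in
theorem gegInt_eq (n : ℕ) (hn : 2 ≤ n) (p : ℝ[X]) :
    gegInt n (fun t => p.eval t) = (auxL n hn 1)⁻¹ * auxL n hn p := by
  simp [gegInt, auxL]

open Polynomial in
theorem adjInt_eq (n : ℕ) (hn : 2 ≤ n) (p : ℝ[X]) :
    adjInt n (fun t => p.eval t) = (auxL n hn (1 - X))⁻¹ * auxL n hn (p * (1 - X)) := by
  simp [adjInt, auxL, mul_assoc]

open Polynomial in
theorem aux_span (P : ℕ → ℝ[X]) (hdeg : ∀ i, (P i).natDegree = i) (h1 : ∀ i, (P i).eval 1 = 1)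
    (L : ℝ[X] →ₗ[ℝ] ℝ) (m : ℕ) (hL : ∀ i < m, L (P i) = 0) (p : ℝ[X])
    (hp : p.degree < m) : L p = 0 := by
  induction m generalizing p with
  | zero =>
    have : p = 0 := by
      rw [← degree_eq_bot]
      simpa using hp
    simp [this]
  | succ m ih =>
    have hP0 : P m ≠ 0 := by
      intro h
      have := h1 m
      simp [h] at this
    have hc : (P m).coeff m ≠ 0 := by
      have := leadingCoeff_ne_zero.2 hP0
      rwa [leadingCoeff, hdeg] at this
    have h2 := ih (fun i hi => hL i (by omega)) (p - (p.coeff m / (P m).coeff m) • P m) ?_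
    · rw [map_sub, map_smul, hL m (by omega)] at h2
      simpa using h2
    · rw [degree_lt_iff_coeff_zero] at hp ⊢
      intro i hi
      rcases Nat.lt_or_ge m i with h | h
      · have h3 : (P m).coeff i = 0 := coeff_eq_zero_of_natDegree_lt (by rw [hdeg]; exact h)
        simp [h3, hp i (by omega)]
      · have : i = m := by omega
        subst this
        simp [hc]

open Polynomial in
/-- The leading coefficient of an adjacent polynomial is positive. -/
theorem aux_lead (n : ℕ) (hn : 2 ≤ n) (Q : ℕ → ℝ[X]) (hdeg : ∀ i, (Q i).natDegree = i)
    (h1 : ∀ i, (Q i).eval 1 = 1)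
    (horth : ∀ i j, i ≠ j → auxL n hn (Q i * Q j * (1 - X)) = 0) (m : ℕ) :
    0 < (Q m).leadingCoeff := by
  have hQ0 : Q m ≠ 0 := by
    intro h
    have := h1 m
    simp [h] at this
  by_contra hneg
  have hlt : (Q m).leadingCoeff < 0 :=
    lt_of_le_of_ne (not_lt.1 hneg) (leadingCoeff_ne_zero.2 hQ0)
  have hm : m ≠ 0 := by
    intro h
    subst h
    have h2 := eq_C_of_natDegree_eq_zero (hdeg 0)
    have h3 := h1 0
    rw [h2, eval_C] at h3
    rw [leadingCoeff, hdeg, h3] at hlt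
    linarith
  have htend := tendsto_atBot_of_leadingCoeff_nonpos (Q m)
    (by rw [← natDegree_pos_iff_degree_pos, hdeg]; omega) hlt.le
  obtain ⟨b, hb1, hb⟩ := ((Filter.eventually_ge_atTop (1 : ℝ)).and
    (htend.eventually (Filter.eventually_le_atBot 0))).exists
  obtain ⟨r, hr, hr0⟩ := intermediate_value_Icc' hb1
    (f := fun t => (Q m).eval t) (by fun_prop) (show (0 : ℝ) ∈ Set.Icc _ _ from
      ⟨hb, by simp only [h1 m]; norm_num⟩)
  have hr1 : 1 ≤ r := hr.1
  obtain ⟨R, hR⟩ := dvd_iff_isRoot.2 (show (Q m).IsRoot r from hr0)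
  have hR0 : R ≠ 0 := by
    intro h
    rw [h, mul_zero] at hR
    exact hQ0 hR
  have hRdeg : R.natDegree + 1 = m := by
    have := hdeg m
    rw [hR, natDegree_mul (X_sub_C_ne_zero r) hR0, natDegree_X_sub_C] at this
    omega
  have hz : auxL n hn (R * Q m * (1 - X)) = 0 := by
    have := aux_span Q hdeg h1 ((auxL n hn).comp (LinearMap.mulRight ℝ (Q m * (1 - X)))) m
      (fun i hi => by
        simpa [mul_assoc] using horth i m (by omega)) R
      ((natDegree_lt_iff_degree_lt hR0).1 (by omega))
    simpa [mul_assoc] using this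
  have h1X : (1 - X : ℝ[X]) ≠ 0 := by
    intro h
    have := congrArg (eval 0) h
    simp at this
  have hpos : 0 < auxL n hn (-(R * Q m * (1 - X))) := by
    apply auxL_pos
    · exact neg_ne_zero.2 (mul_ne_zero (mul_ne_zero hR0 hQ0) h1X)
    · intro t ht
      rw [hR]
      simp only [eval_neg, eval_mul, eval_sub, eval_X, eval_C, eval_one]
      have : -(eval t R * ((t - r) * eval t R) * (1 - t))
        = (eval t R) ^ 2 * ((r - t) * (1 - t)) := by ring
      rw [this]
      exact mul_nonneg (sq_nonneg _) (mul_nonneg (by linarith [ht.2]) (by linarith [ht.2]))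
  rw [map_neg, hz] at hpos
  simp at hpos

/-- positivity of the coefficients of the partial product `q_{k-1}` in the
adjacent basis. Here `β ⟨k-1,_⟩` is the node `β_k` and `β (Fin.last k)` is `β_{k+1}`. -/
theorem stmt_12 (n : ℕ) (hn : 2 ≤ n) (k : ℕ) (hk : 2 ≤ k) (N : ℝ) (hN : 0 < N)
    (P : ℕ → Polynomial ℝ) (hP : IsGegenbauer n P)
    (Q : ℕ → Polynomial ℝ) (hQadj : IsAdjacent n Q)
    (β θ : Fin (k + 1) → ℝ)
    (hquad : IsQuadratureRule n N β θ (LambdaSpace n k P))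
    (hpos : ∀ j ≤ k - 2,
      0 < θ ⟨k - 1, by omega⟩ *
            (∏ i ∈ Finset.univ.filter (fun i : Fin (k + 1) => (i : ℕ) < k - 1),
              (β ⟨k - 1, by omega⟩ - β i)) *
            (1 - β ⟨k - 1, by omega⟩) * (Q j).eval (β ⟨k - 1, by omega⟩) +
          θ (Fin.last k) *
            (∏ i ∈ Finset.univ.filter (fun i : Fin (k + 1) => (i : ℕ) < k - 1),
              (β (Fin.last k) - β i)) *
            (1 - β (Fin.last k)) * (Q j).eval (β (Fin.last k)))
    (e : ℕ → ℝ)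
    (he : (∏ i ∈ Finset.univ.filter (fun i : Fin (k + 1) => (i : ℕ) < k - 1),
        (Polynomial.X - Polynomial.C (β i))) =
      ∑ j ∈ Finset.range k, Polynomial.C (e j) * Q j) :
    ∀ j ≤ k - 1, 0 < e j := by
  obtain ⟨hPdeg, hP1, hPorth⟩ := hP
  obtain ⟨hQdeg, hQ1, hQorth⟩ := hQadj
  obtain ⟨hb1, hb2, hmono, hθ, hex⟩ := hquad
  have hone : ∀ t ∈ Set.Icc (-1 : ℝ) 1, 0 ≤ (1 - Polynomial.X : Polynomial ℝ).eval t := by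
    intro t ht
    simpa using ht.2
  have h1X : (1 - Polynomial.X : Polynomial ℝ) ≠ 0 := by
    intro h
    have := congrArg (Polynomial.eval 0) h
    simp at this
  have hZ : 0 < auxL n hn 1 := auxL_pos n hn 1 one_ne_zero (by simp)
  have hZa : 0 < auxL n hn (1 - Polynomial.X) := auxL_pos n hn _ h1X hone
  have hPo : ∀ i j, i ≠ j → auxL n hn (P i * P j) = 0 := by
    intro i j hij
    have h := hPorth i j hij
    simp only [← Polynomial.eval_mul] at h
    rw [gegInt_eq n hn] at h
    exact (mul_eq_zero.1 h).resolve_left (inv_ne_zero hZ.ne')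
  have hQo : ∀ i j, i ≠ j → auxL n hn (Q i * Q j * (1 - Polynomial.X)) = 0 := by
    intro i j hij
    have h := hQorth i j hij
    simp only [← Polynomial.eval_mul] at h
    rw [adjInt_eq n hn] at h
    exact (mul_eq_zero.1 h).resolve_left (inv_ne_zero hZa.ne')
  have hQ0 : ∀ i, Q i ≠ 0 := by
    intro i h
    have := hQ1 i
    simp [h] at this
  set S := Finset.univ.filter (fun i : Fin (k + 1) => (i : ℕ) < k - 1) with hS
  have hcard : S.card = k - 1 := by
    have : S = Finset.Iio (⟨k - 1, by omega⟩ : Fin (k + 1)) := by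
      ext i
      simp [hS, Fin.lt_def]
    rw [this, Fin.card_Iio]
  set q : Polynomial ℝ := ∏ i ∈ S, (Polynomial.X - Polynomial.C (β i)) with hq
  have hqm : q.Monic := Polynomial.monic_prod_of_monic _ _ fun i _ => Polynomial.monic_X_sub_C _
  have hqdeg : q.natDegree = k - 1 := by
    rw [hq, Polynomial.natDegree_prod_of_monic _ _ fun i _ => Polynomial.monic_X_sub_C _]
    simp [hcard]
  have hqeval : ∀ t, q.eval t = ∏ i ∈ S, (t - β i) := by
    intro t
    simp [hq, Polynomial.eval_prod]
  -- low degree polynomials are integrated exactly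
  have hlow : ∀ p : Polynomial ℝ, p.degree < ((2 * k : ℕ) : WithBot ℕ) →
      (auxL n hn 1)⁻¹ * auxL n hn p = p.eval 1 / N + ∑ i, θ i * p.eval (β i) := by
    intro p hp
    have horth : ∀ m, 2 * k ≤ m → auxL n hn (p * P m) = 0 := by
      intro m hm
      exact aux_span P hPdeg hP1 ((auxL n hn).comp (LinearMap.mulRight ℝ (P m))) (2 * k)
        (fun i hi => by simpa using hPo i m (by omega)) p hp
    rw [← gegInt_eq n hn]
    refine hex _ ⟨p, ⟨?_, ?_, ?_⟩, rfl⟩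
    · have := Polynomial.natDegree_le_of_degree_le hp.le
      omega
    · simp only [← Polynomial.eval_mul]
      rw [gegInt_eq n hn, horth _ le_rfl, mul_zero]
    · simp only [← Polynomial.eval_mul]
      rw [gegInt_eq n hn, horth _ (by omega), mul_zero]
  intro j hj
  rcases Nat.lt_or_ge j (k - 1) with hjk | hjk
  · have hpj := hpos j (by omega)
    simp only [← hqeval] at hpj
    have hdeg : (q * Q j * (1 - Polynomial.X)).degree < ((2 * k : ℕ) : WithBot ℕ) := by
      have h3 : (1 - Polynomial.X : Polynomial ℝ).natDegree ≤ 1 := by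
        refine (Polynomial.natDegree_sub_le _ _).trans ?_
        simp
      rw [← Polynomial.natDegree_lt_iff_degree_lt
        (mul_ne_zero (mul_ne_zero hqm.ne_zero (hQ0 j)) h1X)]
      have h4 := Polynomial.natDegree_mul_le (p := q * Q j) (q := 1 - Polynomial.X)
      have h5 := Polynomial.natDegree_mul_le (p := q) (q := Q j)
      rw [hqdeg, hQdeg] at h5
      omega
    have hsum := hlow _ hdeg
    have hab : (⟨k - 1, by omega⟩ : Fin (k + 1)) ≠ Fin.last k := by
      intro h
      have := congrArg Fin.val h
      simp at this
      omega
    rw [Finset.sum_eq_add_of_mem (⟨k - 1, by omega⟩ : Fin (k + 1)) (Fin.last k)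
      (Finset.mem_univ _) (Finset.mem_univ _) hab] at hsum
    · simp only [Polynomial.eval_mul, Polynomial.eval_sub, Polynomial.eval_one,
        Polynomial.eval_X, sub_self, mul_zero, zero_div, zero_add] at hsum
      have hL : 0 < auxL n hn (q * Q j * (1 - Polynomial.X)) := by
        have : 0 < (auxL n hn 1)⁻¹ * auxL n hn (q * Q j * (1 - Polynomial.X)) := by
          rw [hsum]
          refine lt_of_lt_of_eq hpj ?_
          ring
        exact (pos_iff_pos_of_mul_pos this).1 (inv_pos.2 hZ)
      have hE : auxL n hn (q * Q j * (1 - Polynomial.X)) =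
          e j * auxL n hn (Q j * Q j * (1 - Polynomial.X)) := by
        rw [he, Finset.sum_mul, Finset.sum_mul, map_sum,
          Finset.sum_eq_single_of_mem j (Finset.mem_range.2 (by omega))]
        · rw [mul_assoc, mul_assoc, ← Polynomial.smul_eq_C_mul, map_smul, smul_eq_mul, mul_assoc]
        · intro i _ hij
          rw [mul_assoc, mul_assoc, ← Polynomial.smul_eq_C_mul, map_smul, smul_eq_mul,
            ← mul_assoc (Q i), hQo i j hij, mul_zero]
      have hsq : 0 < auxL n hn (Q j * Q j * (1 - Polynomial.X)) := by
        apply auxL_pos n hn _ (mul_ne_zero (mul_ne_zero (hQ0 j) (hQ0 j)) h1X)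
        intro t ht
        rw [Polynomial.eval_mul, Polynomial.eval_mul]
        exact mul_nonneg (mul_self_nonneg _) (hone t ht)
      rw [hE] at hL
      exact (pos_iff_pos_of_mul_pos hL).2 hsq
    · intro i _ hi
      have hiS : i ∈ S := by
        simp only [hS, Finset.mem_filter, Finset.mem_univ, true_and]
        have h1 : (i : ℕ) ≠ k - 1 := fun h => hi.1 (Fin.ext h)
        have h2 : (i : ℕ) ≠ k := fun h => hi.2 (Fin.ext h)
        have := i.isLt
        omega
      have : q.eval (β i) = 0 := by
        rw [hqeval]
        exact Finset.prod_eq_zero hiS (sub_self _)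
      simp [this]
  · have hjeq : j = k - 1 := by omega
    subst hjeq
    have hc : q.coeff (k - 1) = 1 := by
      have := hqm.leadingCoeff
      rwa [Polynomial.leadingCoeff, hqdeg] at this
    rw [he, Polynomial.finsetSum_coeff,
      Finset.sum_eq_single_of_mem (k - 1) (Finset.mem_range.2 (by omega))] at hc
    · rw [Polynomial.coeff_C_mul] at hc
      have hl := aux_lead n hn Q hQdeg hQ1 hQo (k - 1)
      rw [Polynomial.leadingCoeff, hQdeg] at hl
      exact (pos_iff_pos_of_mul_pos (by rw [hc]; exact one_pos)).2 hl
    · intro i hi hik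
      rw [Polynomial.coeff_C_mul, Polynomial.coeff_eq_zero_of_natDegree_lt, mul_zero]
      rw [hQdeg]
      have := Finset.mem_range.1 hi
      omega
end

section
/- Let n ≥ 2, k ≥ 2, N > 0, and let {(β_i,θ_i)}_{i=1}^{k+1} be a 1/N-quadrature rule exact for Λ_{n,k}, with nodes -1 ≤ β_1 < ⋯ < β_{k+1} < 1 and weights θ_i > 0. Then for every integer j with 2 ≤ j ≤ k, the signed measure with density ∏_{i=k-j+2}^{k+1}(β_i - t) · (1-t) with respect to μ_n is positive definite up to degree k-j: for every real polynomial p, not identically zero, of degree at most k-j, ∫_{-1}^1 p(t)² · ∏_{i=k-j+2}^{k+1}(β_i - t) · (1-t) dμ_n(t) > 0. -/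
open MeasureTheory Finset
open scoped Classical

theorem geg_integrable (n : ℕ) (hn : 2 ≤ n) :
    IntegrableOn (gegWeight n) (Set.Icc (-1 : ℝ) 1) := by
  have hn' : (2 : ℝ) ≤ n := by exact_mod_cast hn
  rw [integrableOn_Icc_iff_integrableOn_Ioo]
  rcases Nat.lt_or_ge n 3 with h3 | h3
  · have h2 : n = 2 := by omega
    subst h2
    have hs : (-1 : ℝ) < (((2 : ℕ) : ℝ) - 3) / 2 := by norm_num
    have hs0 : (((2 : ℕ) : ℝ) - 3) / 2 ≤ 0 := by norm_num
    unfold gegWeight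
    generalize (((2 : ℕ) : ℝ) - 3) / 2 = s at hs hs0 ⊢
    have h1 : IntervalIntegrable (fun t : ℝ => t ^ s) volume 0 2 :=
      intervalIntegral.intervalIntegrable_rpow' hs
    have hA : IntervalIntegrable (fun t : ℝ => (1 - t) ^ s) volume (-1) 1 := by
      have := (h1.comp_sub_left 1).symm
      norm_num at this
      exact this
    have hB : IntervalIntegrable (fun t : ℝ => (1 + t) ^ s) volume (-1) 1 := by
      have := (h1.comp_add_left 1)
      norm_num at this
      exact this
    have hAB := hA.add hB
    rw [intervalIntegrable_iff_integrableOn_Ioo_of_le (by norm_num)] at hAB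
    refine Integrable.mono' hAB ?_ ?_
    · exact (Measurable.pow_const (by fun_prop) _).aestronglyMeasurable
    · refine (ae_restrict_iff' measurableSet_Ioo).2 (Filter.Eventually.of_forall ?_)
      rintro t ⟨ht1, ht2⟩
      have ha : 0 < 1 - t := by linarith
      have hb : 0 < 1 + t := by linarith
      have e : 1 - t ^ 2 = (1 - t) * (1 + t) := by ring
      have pa := Real.rpow_pos_of_pos ha s
      have pb := Real.rpow_pos_of_pos hb s
      rw [e, Real.mul_rpow ha.le hb.le, Real.norm_of_nonneg (by positivity)]
      rcases le_total 0 t with h | h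
      · have := Real.rpow_le_one_of_one_le_of_nonpos (x := 1 + t) (by linarith) hs0
        nlinarith
      · have := Real.rpow_le_one_of_one_le_of_nonpos (x := 1 - t) (by linarith) hs0
        nlinarith
  · have h3' : (3 : ℝ) ≤ n := by exact_mod_cast h3
    have : Continuous (gegWeight n) := by
      unfold gegWeight
      exact Continuous.rpow_const (by fun_prop) (fun _ => Or.inr (by linarith))
    exact (this.continuousOn.integrableOn_Icc).mono_set Set.Ioo_subset_Icc_self

theorem geg_integrable_poly (n : ℕ) (hn : 2 ≤ n) (f : ℝ → ℝ) (hf : Continuous f) :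
    IntegrableOn (fun t => f t * gegWeight n t) (Set.Icc (-1 : ℝ) 1) :=
  (geg_integrable n hn).continuousOn_mul hf.continuousOn isCompact_Icc

theorem gegInt_add_mul (n : ℕ) (hn : 2 ≤ n) (c : ℝ) (f g : ℝ → ℝ)
    (hf : Continuous f) (hg : Continuous g) :
    gegInt n (fun t => f t + c * g t) = gegInt n f + c * gegInt n g := by
  unfold gegInt
  have h : ∀ t, (f t + c * g t) * gegWeight n t =
      f t * gegWeight n t + c * (g t * gegWeight n t) := fun t => by ring
  simp only [h]
  rw [integral_add (geg_integrable_poly n hn f hf)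
    ((geg_integrable_poly n hn g hg).const_mul c), integral_const_mul]
  ring

theorem geg_orth (n : ℕ) (hn : 2 ≤ n) (P : ℕ → Polynomial ℝ) (hP : IsGegenbauer n P)
    (m d : ℕ) (hd : d ≤ m) : ∀ p : Polynomial ℝ, (∀ i, d ≤ i → p.coeff i = 0) →
      gegInt n (fun t => p.eval t * (P m).eval t) = 0 := by
  obtain ⟨h1, h2, h3⟩ := hP
  induction d with
  | zero =>
    intro p hp
    have : p = 0 := by ext i; simpa using hp i (Nat.zero_le _)
    simp [this, gegInt]
  | succ d ih =>
    intro p hp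
    have hne : P d ≠ 0 := by
      intro h
      have := h2 d
      simp [h] at this
    have hl : (P d).coeff d ≠ 0 := by
      have := Polynomial.leadingCoeff_ne_zero.2 hne
      rwa [Polynomial.leadingCoeff, h1 d] at this
    set c := p.coeff d / (P d).coeff d with hc
    have hq := ih (by omega) (p - Polynomial.C c * P d) (by
      intro i hi
      rcases hi.eq_or_lt with h | h
      · subst h
        simp only [Polynomial.coeff_sub, Polynomial.coeff_C_mul, hc]
        field_simp
        simp
      · have e : (P d).coeff i = 0 :=
          Polynomial.coeff_eq_zero_of_natDegree_lt (by rw [h1]; exact h)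
        simp [hp i h, e])
    have key := gegInt_add_mul n hn c
      (fun t => (p - Polynomial.C c * P d).eval t * (P m).eval t)
      (fun t => (P d).eval t * (P m).eval t) (by fun_prop) (by fun_prop)
    rw [hq, h3 d m (by omega)] at key
    have e : (fun t => p.eval t * (P m).eval t) = fun t =>
        (p - Polynomial.C c * P d).eval t * (P m).eval t +
          c * ((P d).eval t * (P m).eval t) := by
      funext t
      simp
      ring
    rw [e, key]
    ring

/-- the signed measures `μ_j` are positive definite up to degree `k-j`. -/
theorem stmt_13 (n : ℕ) (hn : 2 ≤ n) (k : ℕ) (hk : 2 ≤ k) (N : ℝ) (hN : 0 < N)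
    (P : ℕ → Polynomial ℝ) (hP : IsGegenbauer n P)
    (β θ : Fin (k + 1) → ℝ)
    (hquad : IsQuadratureRule n N β θ (LambdaSpace n k P)) :
    ∀ j : ℕ, 2 ≤ j → j ≤ k →
      ∀ p : Polynomial ℝ, p ≠ 0 → p.natDegree ≤ k - j →
        0 < gegInt n (fun t => (p.eval t) ^ 2 *
          (∏ i ∈ Finset.univ.filter (fun i : Fin (k + 1) => k - j + 1 ≤ (i : ℕ)),
            (β i - t)) * (1 - t)) := by
  intro j hj2 hjk p hp hpd
  obtain ⟨-, hlt, hmono, hθ, hex⟩ := hquad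
  set S := Finset.univ.filter (fun i : Fin (k + 1) => k - j + 1 ≤ (i : ℕ)) with hS
  have hcard : S.card ≤ j := by
    have hsub : S.image (fun i : Fin (k + 1) => (i : ℕ)) ⊆ Finset.Ico (k - j + 1) (k + 1) := by
      intro x hx
      obtain ⟨i, hi, rfl⟩ := Finset.mem_image.1 hx
      have := (Finset.mem_filter.1 hi).2
      have := i.2
      simp
      omega
    have := Finset.card_le_card hsub
    rw [Finset.card_image_of_injective _ Fin.val_injective, Nat.card_Ico] at this
    omega
  let q : Polynomial ℝ := p ^ 2 * (∏ i ∈ S, (Polynomial.C (β i) - Polynomial.X)) *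
    (1 - Polynomial.X)
  have hlin : ∀ b : ℝ, (Polynomial.C b - Polynomial.X).natDegree ≤ 1 := fun b => by
    compute_degree
  have hqd : q.natDegree ≤ 2 * k - 1 := by
    have a1 : (p ^ 2).natDegree ≤ 2 * (k - j) :=
      Polynomial.natDegree_pow_le.trans (Nat.mul_le_mul_left 2 hpd)
    have a2 : (∏ i ∈ S, (Polynomial.C (β i) - Polynomial.X)).natDegree ≤ j := by
      refine (Polynomial.natDegree_prod_le _ _).trans ?_
      refine (Finset.sum_le_sum (fun i _ => hlin (β i))).trans ?_
      simpa using hcard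
    have a3 : (1 - Polynomial.X : Polynomial ℝ).natDegree ≤ 1 := by
      simpa using hlin 1
    have := (Polynomial.natDegree_mul_le_of_le (Polynomial.natDegree_mul_le_of_le a1 a2) a3)
    refine this.trans ?_
    omega
  have hqe : ∀ t, q.eval t = (p.eval t) ^ 2 * (∏ i ∈ S, (β i - t)) * (1 - t) := fun t => by
    simp [q, Polynomial.eval_prod]
  have hcoef : ∀ i, 2 * k ≤ i → q.coeff i = 0 := fun i hi =>
    Polynomial.coeff_eq_zero_of_natDegree_lt (by omega)
  have hmain := hex (fun t => q.eval t) ⟨q, ⟨by omega,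
    geg_orth n hn P hP (2 * k) (2 * k) le_rfl q hcoef,
    geg_orth n hn P hP (2 * k + 1) (2 * k) (by omega) q hcoef⟩, rfl⟩
  simp only [hqe] at hmain
  rw [hmain]
  simp only [sub_self, mul_zero, zero_div, zero_add]
  have hzero : ∀ i ∈ S, ∏ l ∈ S, (β l - β i) = 0 := fun i hi =>
    Finset.prod_eq_zero hi (sub_self _)
  have hpos : ∀ i ∉ S, 0 < ∏ l ∈ S, (β l - β i) := by
    intro i hi
    refine Finset.prod_pos fun l hl => sub_pos.2 (hmono ?_)
    have h1 := (Finset.mem_filter.1 hl).2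
    have h2 : ¬ (k - j + 1 ≤ (i : ℕ)) := fun h => hi (Finset.mem_filter.2 ⟨Finset.mem_univ _, h⟩)
    rw [Fin.lt_def]
    omega
  have hnn : ∀ i, 0 ≤ ∏ l ∈ S, (β l - β i) := fun i => by
    by_cases h : i ∈ S
    · exact (hzero i h).ge
    · exact (hpos i h).le
  have hex' : ∃ i, i ∉ S ∧ p.eval (β i) ≠ 0 := by
    by_contra hcon
    push Not at hcon
    have hroots : (Finset.univ \ S).image β ⊆ p.roots.toFinset := by
      intro x hx
      obtain ⟨i, hi, rfl⟩ := Finset.mem_image.1 hx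
      rw [Multiset.mem_toFinset, Polynomial.mem_roots hp]
      exact hcon i (Finset.mem_sdiff.1 hi).2
    have h1 := Finset.card_le_card hroots
    rw [Finset.card_image_of_injective _ hmono.injective] at h1
    have h2 := Finset.le_card_sdiff S (Finset.univ : Finset (Fin (k + 1)))
    rw [Finset.card_univ, Fintype.card_fin] at h2
    have h3 := (Multiset.toFinset_card_le p.roots).trans (Polynomial.card_roots' p)
    omega
  obtain ⟨i, hi, hpi⟩ := hex'
  refine Finset.sum_pos' (fun l _ => ?_) ⟨i, Finset.mem_univ _, ?_⟩
  · have := sub_nonneg.2 (hlt l).le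
    exact mul_nonneg (hθ l).le (mul_nonneg (mul_nonneg (sq_nonneg _) (hnn l)) this)
  · have := sub_pos.2 (hlt i)
    exact mul_pos (hθ i) (mul_pos (mul_pos (by positivity) (hpos i hi)) this)
end
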